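/- Let p be a positive integer, ω = e^{2πi/3}, and for ℓ ∈ {0,1,2} let f_ℓ(p) denote the number of conjugacy classes (under conjugation by elements of SU(3)) of matrices A ∈ SU(3) satisfying A^p = ω^ℓ·I and having three pairwise distinct eigenvalues. If p is not divisible by 3, then f_ℓ(p) = (p² − 3p + 2)/6 for each ℓ ∈ {0,1,2}. If p is divisible by 3, then f_0(p) = (p² − 3p + 6)/6 and f_1(p) = f_2(p) = (p² − 3p)/6. -/

import Mathlib

/-!
A matrix in `SU(3)` with three distinct eigenvalues is diagonalized by an element of `SU(3)`
(`exists_diagonalizing`), so its conjugacy class is determined by its spectrum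
(`countThree_eq`). The classes with `A ^ p = ζ • 1`, where `ζ ^ 3 = 1`, thus correspond to the
3-element sets of `p`-th roots of `ζ` with product `1`. Every such set has six orderings
(`six_mul_ncard_image`), so six times the count is the number of ordered triples `(a, b, c)`.

Since `ζ⁻² = ζ`, any two `p`-th roots `a, b` of `ζ` have a unique completion `c = (a * b)⁻¹`, again
a `p`-th root of `ζ`. Of the `p ^ 2` triples so obtained, inclusion-exclusion removes those with a
repeated entry and leaves `p ^ 2 - 3 * p + 2 * t` (`ncard_tripleSet`), where `t` is the number of
cube roots of unity `a` with `a ^ p = ζ`. If `3 ∤ p` then `t = 1`; if `3 ∣ p` then `t = 3` for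
`ζ = 1` and `t = 0` otherwise.
-/

open Matrix in
/-- The special unitary group `SU(n)` of `n × n` complex matrices with determinant `1`,
as a subgroup of the unitary group. -/
noncomputable def SU (n : ℕ) : Subgroup (Matrix.unitaryGroup (Fin n) ℂ) where
  carrier := {A | (A : Matrix (Fin n) (Fin n) ℂ).det = 1}
  one_mem' := by simp
  mul_mem' := by
    intro a b ha hb
    show ((a * b : Matrix.unitaryGroup (Fin n) ℂ) : Matrix (Fin n) (Fin n) ℂ).det = 1
    rw [Submonoid.coe_mul, Matrix.det_mul]
    rw [Set.mem_setOf_eq] at ha hb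
    rw [ha, hb, mul_one]
  inv_mem' := by
    intro a ha
    show ((a⁻¹ : Matrix.unitaryGroup (Fin n) ℂ) : Matrix (Fin n) (Fin n) ℂ).det = 1
    rw [Set.mem_setOf_eq] at ha
    have : ((a⁻¹ : Matrix.unitaryGroup (Fin n) ℂ) : Matrix (Fin n) (Fin n) ℂ)
        = star (a : Matrix (Fin n) (Fin n) ℂ) := rfl
    rw [this]
    show (Matrix.conjTranspose _).det = 1
    rw [Matrix.det_conjTranspose, ha, star_one]

/-- The underlying matrix of an element of `SU(n)`. -/
noncomputable abbrev matSU {n : ℕ} (A : SU n) : Matrix (Fin n) (Fin n) ℂ := A.val.val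

/-- The number of conjugacy classes of a conjugation-invariant subset `S` of `SU(3)`:
the cardinality of the quotient of `S` by `A ∼ U·A·U⁻¹` for `U ∈ SU(3)`. -/
noncomputable def numConjClasses (S : Set (SU 3)) : ℕ :=
  Nat.card (Quotient (Setoid.mk
    (fun A B : S => ∃ U : SU 3, (B : SU 3) = U * (A : SU 3) * U⁻¹)
    (by
      constructor
      · intro A; exact ⟨1, by group⟩
      · rintro A B ⟨U, hU⟩; exact ⟨U⁻¹, by rw [hU]; group⟩
      · rintro A B C ⟨U, hU⟩ ⟨V, hV⟩; exact ⟨V * U, by rw [hV, hU]; group⟩)))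

/-- The cube root of unity `ω = e^{2πi/3}`. -/
noncomputable def omega3 : ℂ := Complex.exp (2 * Real.pi * Complex.I / 3)

/-- `f(p, ζ)`: the number of `SU(3)`-conjugacy classes of matrices `A ∈ SU(3)` with
`A^p = ζ·I` having three pairwise distinct eigenvalues. -/
noncomputable def countThree (p : ℕ) (ζ : ℂ) : ℕ :=
  numConjClasses {A : SU 3 | matSU A ^ p = ζ • (1 : Matrix (Fin 3) (Fin 3) ℂ) ∧
    (spectrum ℂ (matSU A)).ncard = 3}

/-- `g(p, ζ)`: the number of `SU(3)`-conjugacy classes of matrices `A ∈ SU(3)` with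
`A^p = ζ·I` having exactly two distinct eigenvalues. -/
noncomputable def countTwo (p : ℕ) (ζ : ℂ) : ℕ :=
  numConjClasses {A : SU 3 | matSU A ^ p = ζ • (1 : Matrix (Fin 3) (Fin 3) ℂ) ∧
    (spectrum ℂ (matSU A)).ncard = 2}

/-! ### Diagonalization in `SU(3)` -/

open Matrix in
theorem exists_eigenvector {A : Matrix (Fin 3) (Fin 3) ℂ} {μ : ℂ} (h : μ ∈ spectrum ℂ A) :
    ∃ v : Fin 3 → ℂ, v ≠ 0 ∧ A *ᵥ v = μ • v := by
  rw [spectrum.mem_iff, Matrix.isUnit_iff_isUnit_det, isUnit_iff_ne_zero, not_not] at h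
  obtain ⟨v, hv, h0⟩ := Matrix.exists_mulVec_eq_zero_iff.mpr h
  refine ⟨v, hv, ?_⟩
  rw [Matrix.sub_mulVec, Algebra.algebraMap_eq_smul_one, Matrix.smul_mulVec, Matrix.one_mulVec,
    sub_eq_zero] at h0
  exact h0.symm

open Matrix in
theorem exists_unit_eigenvector {A : Matrix (Fin 3) (Fin 3) ℂ} {μ : ℂ} (h : μ ∈ spectrum ℂ A) :
    ∃ v : Fin 3 → ℂ, star v ⬝ᵥ v = 1 ∧ A *ᵥ v = μ • v := by
  obtain ⟨v, hv, h0⟩ := exists_eigenvector h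
  have hsum : star v ⬝ᵥ v = ((∑ k, Complex.normSq (v k) : ℝ) : ℂ) := by
    simp [dotProduct, Complex.normSq_eq_conj_mul_self]
  have hpos : 0 < ∑ k, Complex.normSq (v k) := by
    obtain ⟨k, hk⟩ := Function.ne_iff.mp hv
    exact Finset.sum_pos' (fun i _ => Complex.normSq_nonneg _)
      ⟨k, Finset.mem_univ _, Complex.normSq_pos.mpr hk⟩
  set r := ∑ k, Complex.normSq (v k)
  refine ⟨(((Real.sqrt r)⁻¹ : ℝ) : ℂ) • v, ?_, ?_⟩
  · rw [star_smul, smul_dotProduct, dotProduct_smul, hsum]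
    simp only [smul_eq_mul, RCLike.star_def, Complex.conj_ofReal]
    norm_cast
    have h2 := Real.mul_self_sqrt hpos.le
    have h3 : Real.sqrt r ≠ 0 := (Real.sqrt_pos.mpr hpos).ne'
    field_simp
    linarith
  · rw [mulVec_smul, h0, smul_comm]

open Matrix in
/-- A unitary matrix preserves the Hermitian form, so unit eigenvectors for distinct eigenvalues
are orthogonal; they are the columns of a diagonalizing unitary matrix, which is then rescaled by
a cube root of the inverse of its determinant. -/
theorem exists_diagonalizing {A : Matrix (Fin 3) (Fin 3) ℂ} (hA : star A * A = 1)
    {d : Fin 3 → ℂ} (hd : Function.Injective d) (hmem : ∀ i, d i ∈ spectrum ℂ A) :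
    ∃ U : SU 3, A * matSU U = matSU U * diagonal d := by
  choose v hv1 hv using fun i => exists_unit_eigenvector (hmem i)
  have key : ∀ i j, star (v i) ⬝ᵥ v j = star (d i) * d j * (star (v i) ⬝ᵥ v j) := by
    intro i j
    have h : star (A *ᵥ v i) ⬝ᵥ (A *ᵥ v j) = star (v i) ⬝ᵥ v j := by
      rw [star_mulVec, ← dotProduct_mulVec, mulVec_mulVec, ← star_eq_conjTranspose, hA,
        one_mulVec]
    rw [hv, hv, star_smul, smul_dotProduct, dotProduct_smul] at h
    simp only [smul_eq_mul] at h
    rw [mul_assoc]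
    exact h.symm
  have hdu : ∀ i, star (d i) * d i = 1 := by
    intro i
    have := key i i
    rw [hv1, mul_one] at this
    exact this.symm
  have horth : ∀ i j, star (v i) ⬝ᵥ v j = if i = j then 1 else 0 := by
    intro i j
    split_ifs with hij
    · subst hij; exact hv1 i
    · by_contra hne
      have h1 : star (d i) * d j = 1 := by
        have := key i j
        exact mul_right_cancel₀ hne (by rw [← this, one_mul])
      have h0 : star (d i) ≠ 0 := left_ne_zero_of_mul_eq_one (hdu i)
      exact hij (hd (mul_left_cancel₀ h0 ((hdu i).trans h1.symm)))
  let V : Matrix (Fin 3) (Fin 3) ℂ := Matrix.of fun k i => v i k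
  have hVV : star V * V = 1 := by
    ext i j
    have := horth i j
    simpa [Matrix.mul_apply, V, dotProduct, Matrix.one_apply] using this
  have hAV : A * V = V * diagonal d := by
    ext k i
    have := congrFun (hv i) k
    rw [mul_diagonal]
    simpa [Matrix.mul_apply, V, mulVec, dotProduct, mul_comm] using this
  have hdet : star V.det * V.det = 1 := by
    have := congrArg Matrix.det hVV
    rwa [det_mul, star_eq_conjTranspose, det_conjTranspose, det_one] at this
  have hdet0 : V.det ≠ 0 := right_ne_zero_of_mul_eq_one hdet
  obtain ⟨c, hc⟩ := IsAlgClosed.exists_pow_nat_eq (V.det)⁻¹ (n := 3) (by norm_num)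
  have hcc : star c * c = 1 := by
    have hn : ‖V.det‖ = 1 := by
      have := congrArg norm hdet
      rw [norm_mul, norm_star, norm_one] at this
      nlinarith [norm_nonneg V.det]
    have hcn : ‖c‖ = 1 := by
      have := congrArg norm hc
      rw [norm_pow, norm_inv, hn, inv_one] at this
      exact (pow_eq_one_iff_of_nonneg (norm_nonneg _) (by norm_num)).mp this
    rw [RCLike.star_def, ← Complex.normSq_eq_conj_mul_self, Complex.normSq_eq_norm_sq, hcn]
    norm_num
  refine ⟨⟨⟨c • V, ?_⟩, ?_⟩, ?_⟩
  · rw [mem_unitaryGroup_iff', star_smul, smul_mul_smul_comm, hcc, hVV, one_smul]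
  · show (c • V).det = 1
    rw [det_smul, Fintype.card_fin, hc, inv_mul_cancel₀ hdet0]
  · show A * (c • V) = (c • V) * diagonal d
    rw [mul_smul_comm, hAV, smul_mul_assoc]

/-! ### Conjugacy classes and spectra -/

/-- Ordered triples of pairwise distinct `p`-th roots of `ζ` with product `1`. -/
def tripleSet (p : ℕ) (ζ : ℂ) : Set (Fin 3 → ℂ) :=
  {d | Function.Injective d ∧ (∀ i, d i ^ p = ζ) ∧ ∏ i, d i = 1}

theorem star_mul_matSU (U : SU 3) : star (matSU U) * matSU U = 1 :=
  Matrix.mem_unitaryGroup_iff'.mp U.val.2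

theorem matSU_mul_star (U : SU 3) : matSU U * star (matSU U) = 1 :=
  Matrix.mem_unitaryGroup_iff.mp U.val.2

theorem spectrum_matSU_conj (U A : SU 3) :
    spectrum ℂ (matSU (U * A * U⁻¹)) = spectrum ℂ (matSU A) := by
  let u : (Matrix (Fin 3) (Fin 3) ℂ)ˣ :=
    ⟨matSU U, star (matSU U), matSU_mul_star U, star_mul_matSU U⟩
  exact spectrum.units_conjugate (u := u) (a := matSU A)

theorem exists_enum_of_ncard {s : Set ℂ} (h : s.ncard = 3) :
    ∃ d : Fin 3 → ℂ, Function.Injective d ∧ Set.range d = s := by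
  obtain ⟨x, y, z, hxy, hxz, hyz, rfl⟩ := Set.ncard_eq_three.mp h
  refine ⟨![x, y, z], ?_, ?_⟩
  · intro i j hij
    fin_cases i <;> fin_cases j <;> simp_all
  · ext w
    simp [eq_comm]
    tauto

open Matrix in
theorem diagonal_of_diagonalizing {A U : SU 3} {d : Fin 3 → ℂ}
    (h : matSU A * matSU U = matSU U * diagonal d) :
    diagonal d = star (matSU U) * matSU A * matSU U := by
  rw [mul_assoc, h, ← mul_assoc, star_mul_matSU, one_mul]

open Matrix in
theorem mem_tripleSet_of_diagonalizing {p : ℕ} {ζ : ℂ} {A U : SU 3} {d : Fin 3 → ℂ}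
    (hd : Function.Injective d) (hA : matSU A ^ p = ζ • (1 : Matrix (Fin 3) (Fin 3) ℂ))
    (h : matSU A * matSU U = matSU U * diagonal d) : d ∈ tripleSet p ζ := by
  have hU : matSU U * star (matSU U) = 1 := matSU_mul_star U
  have hU' : star (matSU U) * matSU U = 1 := star_mul_matSU U
  refine ⟨hd, fun i => ?_, ?_⟩
  · have hpow : matSU A ^ p * matSU U = matSU U * diagonal d ^ p :=
      (SemiconjBy.pow_right (show SemiconjBy (matSU U) (diagonal d) (matSU A) from h.symm) p).symm
    rw [hA, smul_mul_assoc, one_mul] at hpow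
    have h2 : diagonal d ^ p = ζ • (1 : Matrix (Fin 3) (Fin 3) ℂ) := by
      rw [← one_mul (diagonal d ^ p), ← hU', mul_assoc, ← hpow, mul_smul_comm]
    rw [diagonal_pow] at h2
    simpa using congrFun (congrFun h2 i) i
  · have h2 := congrArg det h
    have hUd : (matSU U).det = 1 := U.2
    have hAd : (matSU A).det = 1 := A.2
    rw [det_mul, det_mul, hUd, hAd, det_diagonal, one_mul, one_mul] at h2
    exact h2.symm

open Matrix in
theorem exists_diagonal_mem {p : ℕ} (hp : 0 < p) {ζ : ℂ} (hζ : ‖ζ‖ = 1) {d : Fin 3 → ℂ}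
    (hd : d ∈ tripleSet p ζ) : ∃ A : SU 3, matSU A = diagonal d := by
  obtain ⟨-, hroot, hprod⟩ := hd
  have hn : ∀ i, star (d i) * d i = 1 := by
    intro i
    have h1 : ‖d i‖ = 1 := by
      have := congrArg norm (hroot i)
      rw [norm_pow, hζ] at this
      exact (pow_eq_one_iff_of_nonneg (norm_nonneg _) hp.ne').mp this
    rw [RCLike.star_def, ← Complex.normSq_eq_conj_mul_self, Complex.normSq_eq_norm_sq, h1]
    norm_num
  refine ⟨⟨⟨diagonal d, ?_⟩, ?_⟩, rfl⟩
  · rw [mem_unitaryGroup_iff', star_eq_conjTranspose, diagonal_conjTranspose, diagonal_mul_diagonal]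
    rw [← diagonal_one]
    congr 1
    funext i
    exact hn i
  · show (diagonal d).det = 1
    rw [det_diagonal, hprod]

/-- The spectrum is a complete invariant of the classes being counted. -/
theorem countThree_eq {p : ℕ} (hp : 0 < p) {ζ : ℂ} (hζ : ‖ζ‖ = 1) :
    countThree p ζ = (Set.image Set.range (tripleSet p ζ)).ncard := by
  unfold countThree numConjClasses
  rw [← Nat.card_coe_set_eq]
  set S : Set (SU 3) := {A : SU 3 | matSU A ^ p = ζ • (1 : Matrix (Fin 3) (Fin 3) ℂ) ∧
    (spectrum ℂ (matSU A)).ncard = 3} with hS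
  have hdiag : ∀ A : S, ∀ d : Fin 3 → ℂ, Function.Injective d →
      Set.range d = spectrum ℂ (matSU A.1) →
      ∃ U : SU 3, matSU A.1 * matSU U = matSU U * Matrix.diagonal d := fun A d hd hr =>
    exists_diagonalizing (star_mul_matSU A.1) hd (fun i => hr ▸ Set.mem_range_self i)
  have hspec : ∀ A : S, spectrum ℂ (matSU A.1) ∈ Set.image Set.range (tripleSet p ζ) := by
    intro A
    obtain ⟨d, hd, hr⟩ := exists_enum_of_ncard A.2.2
    obtain ⟨U, hU⟩ := hdiag A d hd hr
    exact ⟨d, mem_tripleSet_of_diagonalizing hd A.2.1 hU, hr⟩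
  refine Nat.card_congr (Equiv.ofBijective (Quotient.lift
    (fun A : S => (⟨spectrum ℂ (matSU A.1), hspec A⟩ : (Set.image Set.range (tripleSet p ζ))))
    ?_) ⟨?_, ?_⟩)
  · rintro A B ⟨U, hU⟩
    apply Subtype.ext
    show spectrum ℂ (matSU A.1) = spectrum ℂ (matSU B.1)
    rw [hU, spectrum_matSU_conj]
  · intro x y
    induction x using Quotient.inductionOn with | _ A
    induction y using Quotient.inductionOn with | _ B
    intro hAB
    have hAB' : spectrum ℂ (matSU A.1) = spectrum ℂ (matSU B.1) := congrArg Subtype.val hAB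
    obtain ⟨d, hd, hr⟩ := exists_enum_of_ncard A.2.2
    obtain ⟨U, hU⟩ := hdiag A d hd hr
    obtain ⟨V, hV⟩ := hdiag B d hd (hr.trans hAB')
    refine Quotient.sound ⟨V * U⁻¹, ?_⟩
    apply Subtype.ext
    apply Subtype.ext
    show matSU B.1 = (matSU V * star (matSU U)) * matSU A.1 * star (matSU V * star (matSU U))
    have h1 := diagonal_of_diagonalizing hU
    calc matSU B.1 = matSU B.1 * matSU V * star (matSU V) := by
          rw [mul_assoc, matSU_mul_star, mul_one]
      _ = _ := by
          rw [hV, h1, star_mul, star_star]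
          simp only [mul_assoc]
  · rintro ⟨s, d, hd, rfl⟩
    obtain ⟨A, hA⟩ := exists_diagonal_mem hp hζ hd
    have hsp : spectrum ℂ (matSU A) = Set.range d := by rw [hA, spectrum_diagonal]
    have hAS : A ∈ S := by
      refine ⟨?_, ?_⟩
      · rw [hA, Matrix.diagonal_pow, ← Matrix.diagonal_one, ← Matrix.diagonal_smul]
        congr 1
        funext i
        simpa using hd.2.1 i
      · rw [hsp, ← Set.image_univ, Set.ncard_image_of_injective _ hd.1, Set.ncard_univ]
        simp
    exact ⟨Quotient.mk _ ⟨A, hAS⟩, Subtype.ext hsp⟩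

/-! ### Counting triples of roots -/

/-- A 3-element set has `3! = 6` orderings. -/
theorem six_mul_ncard_image {p : ℕ} {ζ : ℂ} (hfin : (tripleSet p ζ).Finite) :
    6 * (Set.image Set.range (tripleSet p ζ)).ncard = (tripleSet p ζ).ncard := by
  classical
  obtain ⟨X, hX⟩ := hfin.exists_finset_coe
  rw [← hX, ← Finset.coe_image, Set.ncard_coe_finset, Set.ncard_coe_finset,
    Finset.card_eq_sum_card_image (Set.range : (Fin 3 → ℂ) → Set ℂ) X]
  have hmem : ∀ d, d ∈ X ↔ d ∈ tripleSet p ζ := fun d => by rw [← hX]; rfl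
  rw [Finset.sum_const_nat (m := 6), mul_comm]
  intro s hs
  obtain ⟨d, hd, rfl⟩ := Finset.mem_image.mp hs
  have hd' := (hmem d).mp hd
  have : X.filter (fun e => Set.range e = Set.range d) =
      Finset.univ.image (fun σ : Equiv.Perm (Fin 3) => d ∘ σ) := by
    ext e
    simp only [Finset.mem_filter, Finset.mem_image, Finset.mem_univ, true_and, hmem]
    constructor
    · rintro ⟨he, hr⟩
      refine ⟨(Equiv.ofInjective e he.1).trans
        ((Equiv.setCongr hr).trans (Equiv.ofInjective d hd'.1).symm), ?_⟩
      funext i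
      simp [Equiv.apply_ofInjective_symm]
    · rintro ⟨σ, rfl⟩
      refine ⟨⟨hd'.1.comp σ.injective, fun i => hd'.2.1 _, ?_⟩, ?_⟩
      · simpa using (Equiv.prod_comp σ d).trans hd'.2.2
      · exact σ.surjective.range_comp d
  rw [this, Finset.card_image_of_injective, Finset.card_univ, Fintype.card_perm]
  · simp [Nat.factorial]
  · intro σ τ h
    ext1 i
    exact hd'.1 (congrFun h i)

/-- The finite set of `p`-th roots of `ζ`. -/
noncomputable def rootFinset (p : ℕ) (ζ : ℂ) : Finset ℂ :=
  (Polynomial.nthRoots p ζ).toFinset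

theorem mem_rootFinset {p : ℕ} (hp : 0 < p) {ζ x : ℂ} : x ∈ rootFinset p ζ ↔ x ^ p = ζ := by
  rw [rootFinset, Multiset.mem_toFinset, Polynomial.mem_nthRoots hp]

theorem card_rootFinset {p : ℕ} (hp : 0 < p) {ζ : ℂ} (hζ : ζ ≠ 0) :
    (rootFinset p ζ).card = p := by
  have hprim := Complex.isPrimitiveRoot_exp p hp.ne'
  rw [rootFinset, Multiset.toFinset_card_of_nodup (hprim.nthRoots_nodup hζ), hprim.card_nthRoots,
    if_pos (IsAlgClosed.exists_pow_nat_eq ζ hp)]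

/-- The `p`-th roots of `ζ` that are also cube roots of unity. -/
noncomputable def cubeRootFinset (p : ℕ) (ζ : ℂ) : Finset ℂ :=
  (rootFinset p ζ).filter (fun a => a ^ 3 = 1)

/-- A triple is determined by its first two entries `(a, b)`, the third being `(a * b)⁻¹`. It has
a repetition iff `b = a`, `b = a⁻²` or `a = b⁻²`; each condition cuts out `p` pairs, and any two of
them hold together exactly when `a = b` is a cube root of unity. -/
theorem ncard_tripleSet {p : ℕ} (hp : 0 < p) {ζ : ℂ} (hζ : ζ ^ 3 = 1) :
    (tripleSet p ζ).Finite ∧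
    ((tripleSet p ζ).ncard : ℤ) = (p : ℤ) ^ 2 - 3 * p + 2 * (cubeRootFinset p ζ).card := by
  classical
  have hζ0 : ζ ≠ 0 := by rintro rfl; norm_num at hζ
  set R := rootFinset p ζ with hR
  set T := cubeRootFinset p ζ with hT
  have hRmem : ∀ x, x ∈ R ↔ x ^ p = ζ := fun x => mem_rootFinset hp
  have hTmem : ∀ x, x ∈ T ↔ x ^ p = ζ ∧ x ^ 3 = 1 := fun x => by
    rw [hT, cubeRootFinset, Finset.mem_filter, mem_rootFinset hp]
  have hRcard : R.card = p := card_rootFinset hp hζ0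
  have hR0 : ∀ x ∈ R, x ≠ 0 := by
    intro x hx h0
    rw [hRmem, h0, zero_pow hp.ne'] at hx
    exact hζ0 hx.symm
  have hinv : ∀ a b, a ^ p = ζ → b ^ p = ζ → ((a * b)⁻¹) ^ p = ζ := by
    intro a b ha hb
    rw [inv_pow, mul_pow, ha, hb]
    field_simp
    exact hζ.symm
  let B1 := R.image (fun a => (a, a))
  let B2 := R.image (fun a => (a, (a * a)⁻¹))
  let B3 := R.image (fun a => ((a * a)⁻¹, a))
  let D := T.image (fun a => (a, a))
  have hB1 : B1.card = p := by
    rw [Finset.card_image_of_injective _ (fun a b h => (Prod.ext_iff.mp h).1), hRcard]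
  have hB2 : B2.card = p := by
    rw [Finset.card_image_of_injective _ (fun a b h => (Prod.ext_iff.mp h).1), hRcard]
  have hB3 : B3.card = p := by
    rw [Finset.card_image_of_injective _ (fun a b h => (Prod.ext_iff.mp h).2), hRcard]
  have hD : D.card = T.card :=
    Finset.card_image_of_injective _ (fun a b h => (Prod.ext_iff.mp h).1)
  have mB1 : ∀ a b, (a, b) ∈ B1 ↔ a ∈ R ∧ b = a := by
    intro a b; simp only [B1, Finset.mem_image, Prod.mk.injEq]
    constructor
    · rintro ⟨x, hx, rfl, rfl⟩; exact ⟨hx, rfl⟩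
    · rintro ⟨h, rfl⟩; exact ⟨_, h, rfl, rfl⟩
  have mB2 : ∀ a b, (a, b) ∈ B2 ↔ a ∈ R ∧ b = (a * a)⁻¹ := by
    intro a b; simp only [B2, Finset.mem_image, Prod.mk.injEq]
    constructor
    · rintro ⟨x, hx, rfl, rfl⟩; exact ⟨hx, rfl⟩
    · rintro ⟨h, rfl⟩; exact ⟨_, h, rfl, rfl⟩
  have mB3 : ∀ a b, (a, b) ∈ B3 ↔ b ∈ R ∧ a = (b * b)⁻¹ := by
    intro a b; simp only [B3, Finset.mem_image, Prod.mk.injEq]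
    constructor
    · rintro ⟨x, hx, rfl, rfl⟩; exact ⟨hx, rfl⟩
    · rintro ⟨h, rfl⟩; exact ⟨_, h, rfl, rfl⟩
  have mD : ∀ a b, (a, b) ∈ D ↔ (a ∈ R ∧ a ^ 3 = 1) ∧ b = a := by
    intro a b; simp only [D, Finset.mem_image, Prod.mk.injEq, hTmem, hRmem]
    constructor
    · rintro ⟨x, hx, rfl, rfl⟩; exact ⟨hx, rfl⟩
    · rintro ⟨h, rfl⟩; exact ⟨_, h, rfl, rfl⟩
  have hself : ∀ a : ℂ, a ∈ R → (a = (a * a)⁻¹ ↔ a ^ 3 = 1) := by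
    intro a ha
    have := hR0 a ha
    rw [← mul_eq_one_iff_eq_inv₀ (mul_ne_zero this this)]
    ring_nf
  have i12 : B1 ∩ B2 = D := by
    ext ⟨a, b⟩
    rw [Finset.mem_inter, mB1, mB2, mD]
    constructor
    · rintro ⟨⟨ha, rfl⟩, -, h⟩; exact ⟨⟨ha, (hself _ ha).mp h⟩, rfl⟩
    · rintro ⟨⟨ha, h⟩, rfl⟩; exact ⟨⟨ha, rfl⟩, ha, (hself _ ha).mpr h⟩
  have i123 : (B1 ∪ B2) ∩ B3 = D := by
    ext ⟨a, b⟩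
    rw [Finset.mem_inter, Finset.mem_union, mB1, mB2, mB3, mD]
    constructor
    · rintro ⟨⟨ha, rfl⟩ | ⟨ha, hb⟩, hbR, h⟩
      · exact ⟨⟨ha, (hself _ ha).mp h⟩, rfl⟩
      · have ha0 := hR0 a ha
        have hb0 := hR0 b hbR
        -- `b = a⁻²` and `a = b⁻²` give `a = a⁴`
        have h3 : a ^ 3 = 1 := by
          have h4 : a = a * a ^ 3 := by
            calc a = (b * b)⁻¹ := h
              _ = a * a ^ 3 := by rw [hb, ← mul_inv, inv_inv]; ring
          exact (mul_left_cancel₀ ha0 (by rw [← h4, mul_one])).symm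
        exact ⟨⟨ha, h3⟩, by rw [hb, ← (hself a ha).mpr h3]⟩
    · rintro ⟨⟨ha, h⟩, rfl⟩; exact ⟨Or.inl ⟨ha, rfl⟩, ha, (hself _ ha).mpr h⟩
  let G := (R ×ˢ R) \ (B1 ∪ B2 ∪ B3)
  have hsub : B1 ∪ B2 ∪ B3 ⊆ R ×ˢ R := by
    rintro ⟨a, b⟩ h
    rw [Finset.mem_union, Finset.mem_union, mB1, mB2, mB3] at h
    rw [Finset.mem_product]
    rcases h with (⟨ha, rfl⟩ | ⟨ha, rfl⟩) | ⟨hb, rfl⟩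
    · exact ⟨ha, ha⟩
    · exact ⟨ha, (hRmem _).mpr (hinv _ _ ((hRmem _).mp ha) ((hRmem _).mp ha))⟩
    · exact ⟨(hRmem _).mpr (hinv _ _ ((hRmem _).mp hb) ((hRmem _).mp hb)), hb⟩
  have hG : (G.card : ℤ) = (p : ℤ) ^ 2 - 3 * p + 2 * T.card := by
    have e1 := Finset.card_union_add_card_inter B1 B2
    have e2 := Finset.card_union_add_card_inter (B1 ∪ B2) B3
    have e3 := Finset.card_sdiff_add_card_eq_card hsub
    rw [i12, hB1, hB2, hD] at e1
    rw [i123, hB3, hD] at e2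
    rw [Finset.card_product, hRcard] at e3
    change G.card + _ = _ at e3
    zify at e1 e2 e3
    linarith
  have himg : tripleSet p ζ =
      ((G.image (fun x => ![x.1, x.2, (x.1 * x.2)⁻¹]) : Finset (Fin 3 → ℂ)) : Set (Fin 3 → ℂ)) := by
    ext d
    rw [Finset.mem_coe, Finset.mem_image]
    constructor
    · rintro ⟨hd, hr, hprod⟩
      rw [Fin.prod_univ_three] at hprod
      have h2 : d 2 = (d 0 * d 1)⁻¹ := eq_inv_of_mul_eq_one_right hprod
      have m : ∀ i, d i ∈ R := fun i => (hRmem _).mpr (hr i)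
      refine ⟨(d 0, d 1), ?_, ?_⟩
      · rw [Finset.mem_sdiff, Finset.mem_product, Finset.mem_union, Finset.mem_union, mB1, mB2,
          mB3]
        refine ⟨⟨m 0, m 1⟩, ?_⟩
        rintro ((⟨-, h⟩ | ⟨-, h⟩) | ⟨-, h⟩)
        · exact absurd (hd h) (by decide)
        · have : d 2 = d 0 := by
            have := hR0 _ (m 0)
            rw [h2, h]; field_simp
          exact absurd (hd this) (by decide)
        · have : d 2 = d 1 := by
            have := hR0 _ (m 1)
            rw [h2, h]; field_simp
          exact absurd (hd this) (by decide)
      · funext i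
        fin_cases i
        · rfl
        · rfl
        · exact h2.symm
    · rintro ⟨⟨a, b⟩, hab, rfl⟩
      rw [Finset.mem_sdiff, Finset.mem_product, Finset.mem_union, Finset.mem_union, mB1, mB2,
          mB3] at hab
      obtain ⟨⟨ha, hb⟩, hn⟩ := hab
      simp only at ha hb
      have ha0 := hR0 a ha
      have hb0 := hR0 b hb
      have n1 : a ≠ b := fun h => hn (Or.inl (Or.inl ⟨ha, h.symm⟩))
      have n2 : a ≠ (a * b)⁻¹ := fun h => hn (Or.inl (Or.inr ⟨ha, by
        rw [← mul_eq_one_iff_eq_inv₀ (mul_ne_zero ha0 hb0)] at h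
        rw [← mul_eq_one_iff_eq_inv₀ (mul_ne_zero ha0 ha0), ← h]; ring⟩))
      have n3 : b ≠ (a * b)⁻¹ := fun h => hn (Or.inr ⟨hb, by
        rw [← mul_eq_one_iff_eq_inv₀ (mul_ne_zero ha0 hb0)] at h
        rw [← mul_eq_one_iff_eq_inv₀ (mul_ne_zero hb0 hb0), ← h]; ring⟩)
      refine ⟨?_, ?_, ?_⟩
      · intro i j hij
        fin_cases i <;> fin_cases j <;> first | rfl | (exfalso; revert hij)
        · exact n1
        · exact n2
        · exact n1.symm
        · exact n3
        · exact n2.symm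
        · exact n3.symm
      · intro i
        fin_cases i
        · exact (hRmem _).mp ha
        · exact (hRmem _).mp hb
        · exact hinv a b ((hRmem _).mp ha) ((hRmem _).mp hb)
      · rw [Fin.prod_univ_three]
        exact mul_inv_cancel₀ (mul_ne_zero ha0 hb0)
  refine ⟨himg ▸ Finset.finite_toSet _, ?_⟩
  rw [himg, Set.ncard_coe_finset, Finset.card_image_of_injective, hG]
  rintro ⟨a, b⟩ ⟨a', b'⟩ h
  exact Prod.ext (congrFun h 0) (congrFun h 1)

/-! ### Cube roots of unity among the `p`-th roots -/

theorem six_mul_countThree {p : ℕ} (hp : 0 < p) {ζ : ℂ} (hζ : ζ ^ 3 = 1) :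
    (6 * countThree p ζ : ℤ) = (p : ℤ) ^ 2 - 3 * p + 2 * (cubeRootFinset p ζ).card := by
  have hn : ‖ζ‖ = 1 := Complex.norm_eq_one_of_pow_eq_one hζ (by norm_num)
  obtain ⟨hfin, hcard⟩ := ncard_tripleSet hp hζ
  rw [← hcard, ← six_mul_ncard_image hfin, countThree_eq hp hn]
  push_cast
  ring

/-- When `3 ∤ p`, raising to the power `p` permutes the cube roots of unity. -/
theorem card_cubeRootFinset_of_not_dvd {p : ℕ} (hp : 0 < p) (h3 : ¬ 3 ∣ p) {ζ : ℂ}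
    (hζ : ζ ^ 3 = 1) : (cubeRootFinset p ζ).card = 1 := by
  have hmod : ∀ a : ℂ, a ^ 3 = 1 → a ^ p = a ^ (p % 3) := fun a ha => pow_eq_pow_mod p ha
  have hcases : p % 3 = 1 ∨ p % 3 = 2 := by omega
  -- the inverse of `a ↦ a ^ p` is `a ↦ a ^ (p % 3)`
  refine Finset.card_eq_one.mpr ⟨ζ ^ (p % 3), ?_⟩
  ext a
  rw [cubeRootFinset, Finset.mem_filter, mem_rootFinset hp, Finset.mem_singleton]
  constructor
  · rintro ⟨h1, h2⟩
    rw [hmod a h2] at h1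
    rcases hcases with h | h <;> rw [h] at h1 ⊢ <;> rw [← h1]
    · ring
    · calc a = a ^ 3 * a := by rw [h2, one_mul]
        _ = _ := by ring
  · rintro rfl
    have h2 : (ζ ^ (p % 3)) ^ 3 = 1 := by rw [pow_right_comm, hζ, one_pow]
    refine ⟨?_, h2⟩
    rw [hmod _ h2]
    rcases hcases with h | h <;> rw [h]
    · ring
    · calc (ζ ^ 2) ^ 2 = ζ ^ 3 * ζ := by ring
        _ = ζ := by rw [hζ, one_mul]

theorem card_cubeRootFinset_one {p : ℕ} (hp : 0 < p) (h3 : 3 ∣ p) :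
    (cubeRootFinset p 1).card = 3 := by
  have : cubeRootFinset p 1 = rootFinset 3 1 := by
    ext a
    rw [cubeRootFinset, Finset.mem_filter, mem_rootFinset hp, mem_rootFinset (by norm_num)]
    refine ⟨fun h => h.2, fun h => ⟨?_, h⟩⟩
    obtain ⟨k, rfl⟩ := h3
    rw [pow_mul, h, one_pow]
  rw [this, card_rootFinset (by norm_num) one_ne_zero]

theorem card_cubeRootFinset_of_ne_one {p : ℕ} (hp : 0 < p) (h3 : 3 ∣ p) {ζ : ℂ} (hζ : ζ ≠ 1) :
    (cubeRootFinset p ζ).card = 0 := by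
  rw [Finset.card_eq_zero, Finset.eq_empty_iff_forall_notMem]
  intro a ha
  rw [cubeRootFinset, Finset.mem_filter, mem_rootFinset hp] at ha
  obtain ⟨k, rfl⟩ := h3
  apply hζ
  rw [← ha.1, pow_mul, ha.2, one_pow]

theorem isPrimitiveRoot_omega3 : IsPrimitiveRoot omega3 3 := by
  have := Complex.isPrimitiveRoot_exp 3 (by norm_num)
  simpa [omega3] using this

/-- Counting `p`-th roots of central elements in `SU(3)` with three distinct
eigenvalues: if `3 ∤ p` then `f_ℓ(p) = (p² − 3p + 2)/6` for each `ℓ`; if `3 ∣ p` then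
`f_0(p) = (p² − 3p + 6)/6` and `f_1(p) = f_2(p) = (p² − 3p)/6`. -/
theorem count_roots_three_distinct_eigenvalues (p : ℕ) (hp : 0 < p) :
    (¬ (3 ∣ p) → ∀ l : Fin 3,
      (6 * countThree p (omega3 ^ (l : ℕ)) : ℤ) = (p : ℤ) ^ 2 - 3 * p + 2) ∧
    (3 ∣ p →
      (6 * countThree p (omega3 ^ (0 : ℕ)) : ℤ) = (p : ℤ) ^ 2 - 3 * p + 6 ∧
      (6 * countThree p (omega3 ^ (1 : ℕ)) : ℤ) = (p : ℤ) ^ 2 - 3 * p ∧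
      (6 * countThree p (omega3 ^ (2 : ℕ)) : ℤ) = (p : ℤ) ^ 2 - 3 * p) := by
  have hω := isPrimitiveRoot_omega3
  have hpow : ∀ l : ℕ, (omega3 ^ l) ^ 3 = 1 := fun l => by
    rw [pow_right_comm, hω.pow_eq_one, one_pow]
  refine ⟨fun h3 l => ?_, fun h3 => ⟨?_, ?_, ?_⟩⟩
  · rw [six_mul_countThree hp (hpow l), card_cubeRootFinset_of_not_dvd hp h3 (hpow l)]
    norm_num
  · rw [six_mul_countThree hp (hpow 0), pow_zero, card_cubeRootFinset_one hp h3]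
    norm_num
  · rw [six_mul_countThree hp (hpow 1), card_cubeRootFinset_of_ne_one hp h3
      (hω.pow_ne_one_of_pos_of_lt (by norm_num) (by norm_num))]
    norm_num
  · rw [six_mul_countThree hp (hpow 2), card_cubeRootFinset_of_ne_one hp h3
      (hω.pow_ne_one_of_pos_of_lt (by norm_num) (by norm_num))]
    norm_num
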